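/- The graph H on vertex set {1,2,3,4,5,6,7} with edge set {{1,2}, {1,3}, {2,3}, {1,4}, {3,4}, {1,5}, {2,5}, {4,5}, {2,6}, {3,6}, {4,6}, {5,6}, {4,7}, {5,7}, {6,7}} is not word-representable. -/

import Mathlib

/-- Two letters `x ≠ y` alternate in the word `w` if, after deleting all other letters,
consecutive letters are always distinct (i.e. the result is `xyxy...` or `yxyx...`). -/
def Alternate {V : Type*} [DecidableEq V] (w : List V) (x y : V) : Prop :=
  (w.filter (fun z => z = x ∨ z = y)).Chain' (· ≠ ·)

/-- A graph is word-representable if some word over its vertex alphabet, containing every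
vertex, is such that two distinct letters alternate iff they are adjacent. -/
def WordRepresentable {V : Type*} [DecidableEq V] (G : SimpleGraph V) : Prop :=
  ∃ w : List V, (∀ v : V, v ∈ w) ∧ ∀ x y : V, x ≠ y → (Alternate w x y ↔ G.Adj x y)

/-- The 7-vertex graph `H` with vertices `0,...,6` (representing `1,...,7`) and the fifteen
edges `{1,2}, {1,3}, {2,3}, {1,4}, {3,4}, {1,5}, {2,5}, {4,5}, {2,6}, {3,6}, {4,6},
{5,6}, {4,7}, {5,7}, {6,7}` (here written 0-indexed). -/
def graphH : SimpleGraph (Fin 7) :=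
  SimpleGraph.fromRel (fun a b => (a, b) ∈
    ([(0, 1), (0, 2), (1, 2), (0, 3), (2, 3), (0, 4), (1, 4), (3, 4),
      (1, 5), (2, 5), (3, 5), (4, 5), (3, 6), (4, 6), (5, 6)] : List (Fin 7 × Fin 7)))

/-- In every prefix of `w`, the letter `y` occurs at most as often as `x`. -/
def Dom {V : Type*} [DecidableEq V] (w : List V) (x y : V) : Prop :=
  ∀ n : ℕ, (w.take n).count y ≤ (w.take n).count x

/-- In every prefix of `w`, the letter `x` occurs at most once more than `y`. -/
def Close {V : Type*} [DecidableEq V] (w : List V) (x y : V) : Prop :=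
  ∀ n : ℕ, (w.take n).count x ≤ (w.take n).count y + 1

theorem alt_head_iff {V : Type*} [DecidableEq V] (w : List V) : ∀ x y : V, x ≠ y →
    ((Alternate w x y ∧ (w.filter (fun z => z = x ∨ z = y)).head? ≠ some y) ↔
      (Dom w x y ∧ Close w x y)) := by
  induction w with
  | nil => intro x y _; simp [Alternate, List.Chain', Dom, Close]
  | cons z t ih =>
    intro x y hxy
    have key : (Dom (z :: t) x y ∧ Close (z :: t) x y) ↔
        ∀ n, ((z :: t.take n).count y ≤ (z :: t.take n).count x) ∧
          ((z :: t.take n).count x ≤ (z :: t.take n).count y + 1) := by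
      constructor
      · rintro ⟨h1, h2⟩ n
        exact ⟨by simpa using h1 (n + 1), by simpa using h2 (n + 1)⟩
      · intro h
        constructor
        · intro n
          cases n with
          | zero => simp
          | succ n => simpa using (h n).1
        · intro n
          cases n with
          | zero => simp
          | succ n => simpa using (h n).2
    rw [key]
    by_cases hx : z = x
    · subst hx
      have h1 := ih y z hxy.symm
      have hf : (t.filter (fun u => decide (u = y ∨ u = z))) =
          t.filter (fun u => decide (u = z ∨ u = y)) := by
        congr 1; funext u; simp [or_comm]
      have hR : (Dom t y z ∧ Close t y z) ↔
          ∀ n, ((z :: t.take n).count y ≤ (z :: t.take n).count z) ∧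
          ((z :: t.take n).count z ≤ (z :: t.take n).count y + 1) := by
        simp only [Dom, Close, List.count_cons_self, List.count_cons_of_ne hxy]
        constructor
        · rintro ⟨a, b⟩ n
          exact ⟨b n, by have := a n; omega⟩
        · intro h
          exact ⟨fun n => by have := (h n).2; omega, fun n => (h n).1⟩
      rw [← hR, ← h1]
      unfold Alternate
      rw [hf]
      simp only [List.filter_cons, true_or, decide_true, if_true]
      have hc : ∀ l : List V, (z :: l).Chain' (· ≠ ·) ↔ (l.Chain' (· ≠ ·) ∧ l.head? ≠ some z) := by
        intro l
        cases l with
        | nil => simp [List.Chain']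
        | cons a l =>
          simp only [List.Chain', List.isChain_cons_cons, List.head?_cons, ne_eq, Option.some.injEq]
          constructor
          · rintro ⟨a, b⟩; exact ⟨b, fun h => a h.symm⟩
          · rintro ⟨a, b⟩; exact ⟨fun h => b h.symm, a⟩
      rw [hc]
      simp [hxy]
    · by_cases hy : z = y
      · subst hy
        simp only [List.filter_cons, or_true, decide_true, if_true, List.head?_cons]
        simp only [ne_eq, not_true_eq_false, and_false, false_iff]
        intro h
        have := (h 0).1
        simp [List.count_cons, hx] at this
      · have h1 := ih x y hxy
        have : Alternate (z :: t) x y ↔ Alternate t x y := by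
          simp [Alternate, hx, hy]
        rw [this]
        have h2 : ((z :: t).filter (fun z => decide (z = x ∨ z = y))) =
            t.filter (fun z => decide (z = x ∨ z = y)) := by
          simp [hx, hy]
        rw [h2, h1]
        simp only [Dom, Close, List.count_cons_of_ne hx, List.count_cons_of_ne hy]
        exact ⟨fun h n => ⟨h.1 n, h.2 n⟩, fun h => ⟨fun n => (h n).1, fun n => (h n).2⟩⟩

theorem alternate_symm {V : Type*} [DecidableEq V] {w : List V} {x y : V}
    (h : Alternate w x y) : Alternate w y x := by
  have hf : (w.filter (fun u => decide (u = y ∨ u = x))) =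
      w.filter (fun u => decide (u = x ∨ u = y)) := by
    congr 1; funext u; simp [or_comm]
  unfold Alternate at *
  rw [hf]; exact h

theorem alternate_cases {V : Type*} [DecidableEq V] {w : List V} {x y : V} (hxy : x ≠ y)
    (h : Alternate w x y) : (Dom w x y ∧ Close w x y) ∨ (Dom w y x ∧ Close w y x) := by
  by_cases hh : (w.filter (fun z => z = x ∨ z = y)).head? = some y
  · right
    refine (alt_head_iff w y x hxy.symm).1 ⟨alternate_symm h, ?_⟩
    have hf : (w.filter (fun u => decide (u = y ∨ u = x))) =
        w.filter (fun u => decide (u = x ∨ u = y)) := by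
      congr 1; funext u; simp [or_comm]
    rw [hf, hh]
    simpa using hxy.symm
  · left
    exact (alt_head_iff w x y hxy).1 ⟨h, hh⟩

theorem dom_antisymm {V : Type*} [DecidableEq V] {w : List V} {x y : V} (hx : x ∈ w)
    (h1 : Dom w x y) (h2 : Dom w y x) : x = y := by
  by_contra hne
  induction w with
  | nil => simp at hx
  | cons z t ih =>
    have a := h1 1
    have b := h2 1
    simp only [List.take_succ_cons, List.take_zero, List.count_cons, List.count_nil,
      beq_iff_eq] at a b
    have hzx : z ≠ x := by
      rintro rfl
      simp [hne] at b
    have hzy : z ≠ y := by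
      rintro rfl
      simp [hzx] at a
    refine ih ?_ ?_ ?_
    · simpa [hzx.symm] using hx
    · intro n
      simpa [List.count_cons, hzx, hzy] using h1 (n + 1)
    · intro n
      simpa [List.count_cons, hzx, hzy] using h2 (n + 1)

/-- The combinatorial core: there is no partial order on the vertices in which
adjacent vertices are comparable and no forbidden shortcut exists. -/
theorem no_order (le : Fin 7 → Fin 7 → Prop)
    (refl : ∀ a, le a a)
    (trans : ∀ a b c, le a b → le b c → le a c)
    (asymm : ∀ a b, le a b → le b a → a = b)
    (tot : ∀ a b, graphH.Adj a b → le a b ∨ le b a)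
    (short : ∀ x a b y, graphH.Adj x y → le x a → le a b → le b y → a ≠ b →
      graphH.Adj a b) : False := by
  have hadj : ∀ a b, graphH.Adj a b ↔ (a ≠ b ∧ ((a, b) ∈
    ([(0, 1), (0, 2), (1, 2), (0, 3), (2, 3), (0, 4), (1, 4), (3, 4),
      (1, 5), (2, 5), (3, 5), (4, 5), (3, 6), (4, 6), (5, 6)] : List (Fin 7 × Fin 7)) ∨ (b, a) ∈
    ([(0, 1), (0, 2), (1, 2), (0, 3), (2, 3), (0, 4), (1, 4), (3, 4),
      (1, 5), (2, 5), (3, 5), (4, 5), (3, 6), (4, 6), (5, 6)] : List (Fin 7 × Fin 7)))) :=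
    fun a b => Iff.rfl
  -- a shortcut whose first, respectively last, vertex lies on the missing edge
  have sl : ∀ a b y, (graphH.Adj a y ∧ a ≠ b ∧ ¬ graphH.Adj a b) → le a b → le b y → False :=
    fun a b y h h1 h2 => h.2.2 (short a a b y h.1 (refl a) h1 h2 h.2.1)
  have sr : ∀ x a b, (graphH.Adj x b ∧ a ≠ b ∧ ¬ graphH.Adj a b) → le x a → le a b → False :=
    fun x a b h h1 h2 => h.2.2 (short x a b b h.1 h1 h2 (refl b) h.2.1)
  have as : ∀ a b, a ≠ b → le a b → le b a → False := fun a b h h1 h2 => h (asymm a b h1 h2)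
  simp only [hadj] at tot sl sr
  have t01 := tot 0 1 (by decide)
  have t02 := tot 0 2 (by decide)
  have t12 := tot 1 2 (by decide)
  have t03 := tot 0 3 (by decide)
  have t23 := tot 2 3 (by decide)
  have t04 := tot 0 4 (by decide)
  have t14 := tot 1 4 (by decide)
  have t34 := tot 3 4 (by decide)
  have t15 := tot 1 5 (by decide)
  have t25 := tot 2 5 (by decide)
  have t35 := tot 3 5 (by decide)
  have t45 := tot 4 5 (by decide)
  have t36 := tot 3 6 (by decide)
  have t46 := tot 4 6 (by decide)
  have t56 := tot 5 6 (by decide)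
  have a01 := as 0 1 (by decide)
  have a02 := as 0 2 (by decide)
  have a12 := as 1 2 (by decide)
  have a03 := as 0 3 (by decide)
  have a23 := as 2 3 (by decide)
  have a04 := as 0 4 (by decide)
  have a14 := as 1 4 (by decide)
  have a34 := as 3 4 (by decide)
  have a15 := as 1 5 (by decide)
  have a25 := as 2 5 (by decide)
  have a35 := as 3 5 (by decide)
  have a45 := as 4 5 (by decide)
  have a36 := as 3 6 (by decide)
  have a46 := as 4 6 (by decide)
  have a56 := as 5 6 (by decide)
  have s053 := sl 0 5 3 (by decide)
  have s054 := sl 0 5 4 (by decide)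
  have s063 := sl 0 6 3 (by decide)
  have s064 := sl 0 6 4 (by decide)
  have s134 := sl 1 3 4 (by decide)
  have s135 := sl 1 3 5 (by decide)
  have s164 := sl 1 6 4 (by decide)
  have s165 := sl 1 6 5 (by decide)
  have s243 := sl 2 4 3 (by decide)
  have s245 := sl 2 4 5 (by decide)
  have s263 := sl 2 6 3 (by decide)
  have s265 := sl 2 6 5 (by decide)
  have s314 := sl 3 1 4 (by decide)
  have s315 := sl 3 1 5 (by decide)
  have s423 := sl 4 2 3 (by decide)
  have s425 := sl 4 2 5 (by decide)
  have s503 := sl 5 0 3 (by decide)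
  have s504 := sl 5 0 4 (by decide)
  have s603 := sl 6 0 3 (by decide)
  have s604 := sl 6 0 4 (by decide)
  have s614 := sl 6 1 4 (by decide)
  have s615 := sl 6 1 5 (by decide)
  have s623 := sl 6 2 3 (by decide)
  have s625 := sl 6 2 5 (by decide)
  have s305 := sr 3 0 5 (by decide)
  have s306 := sr 3 0 6 (by decide)
  have s324 := sr 3 2 4 (by decide)
  have s326 := sr 3 2 6 (by decide)
  have s342 := sr 3 4 2 (by decide)
  have s350 := sr 3 5 0 (by decide)
  have s360 := sr 3 6 0 (by decide)
  have s362 := sr 3 6 2 (by decide)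
  have s405 := sr 4 0 5 (by decide)
  have s406 := sr 4 0 6 (by decide)
  have s413 := sr 4 1 3 (by decide)
  have s416 := sr 4 1 6 (by decide)
  have s431 := sr 4 3 1 (by decide)
  have s450 := sr 4 5 0 (by decide)
  have s460 := sr 4 6 0 (by decide)
  have s461 := sr 4 6 1 (by decide)
  have s513 := sr 5 1 3 (by decide)
  have s516 := sr 5 1 6 (by decide)
  have s524 := sr 5 2 4 (by decide)
  have s526 := sr 5 2 6 (by decide)
  have s531 := sr 5 3 1 (by decide)
  have s542 := sr 5 4 2 (by decide)
  have s561 := sr 5 6 1 (by decide)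
  have s562 := sr 5 6 2 (by decide)
  clear hadj tot short asymm refl sl sr as
  grind (splits := 40)

/-- The graph `H` is not word-representable. -/
theorem graphH_not_word_representable : ¬ WordRepresentable graphH := by
  rintro ⟨w, hmem, hw⟩
  refine no_order (Dom w) (fun a n => le_rfl) (fun a b c h1 h2 n => (h2 n).trans (h1 n))
    (fun a b h1 h2 => dom_antisymm (hmem a) h1 h2) ?_ ?_
  · intro a b hab
    rcases alternate_cases hab.ne ((hw a b hab.ne).2 hab) with h | h
    · exact Or.inl h.1
    · exact Or.inr h.1
  · intro x a b y hxy hxa hab hby hne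
    have hc : Close w x y := by
      rcases alternate_cases hxy.ne ((hw x y hxy.ne).2 hxy) with h | h
      · exact h.2
      · exact absurd (dom_antisymm (hmem y) h.1
          (fun n => ((hby n).trans (hab n)).trans (hxa n))).symm hxy.ne
    refine (hw a b hne).1 ((alt_head_iff w a b hne).2 ⟨hab, fun n => ?_⟩).1
    have h1 := hxa n
    have h2 := hby n
    have h3 := hc n
    omega
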